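/- Let G be a finite multigraph drawn in the plane with V vertices and E edges, with edge multiplicity at most m, such that E ≥ 4mV. Then the number of edge crossings in the drawing is at least c·E³/(m·V²) for an absolute constant c > 0. -/

import Mathlib

open Set

open Classical in
/-- The total increment along `[0, 1]` of a continuous logarithm of `f`. -/
noncomputable def logIncrement (f : ℝ → ℂ) : ℂ :=
  if h : ∃ g : ℝ → ℂ, Continuous g ∧ ∀ t, Complex.exp (g t) = f t then
    h.choose 1 - h.choose 0 else 0

theorem exists_continuous_exp_eq {A : Type*} [TopologicalSpace A] [SimplyConnectedSpace A]
    [LocallyPathConnectedSpace A] {f : A → ℂ} (hf : Continuous f) (h0 : ∀ a, f a ≠ 0) :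
    ∃ g : A → ℂ, Continuous g ∧ ∀ a, Complex.exp (g a) = f a := by
  obtain ⟨a₀⟩ : Nonempty A := inferInstance
  obtain ⟨F, ⟨-, hF⟩, -⟩ := Complex.isCoveringMapOn_exp.existsUnique_continuousMap_lifts
    ⟨f, hf⟩ (a₀ := a₀) (e₀ := Complex.log (f a₀)) (Complex.exp_log (h0 a₀)) h0
  exact ⟨F, F.continuous, congrFun hF⟩

theorem logIncrement_eq {f g : ℝ → ℂ} (hg : Continuous g) (h : ∀ t, Complex.exp (g t) = f t) :
    logIncrement f = g 1 - g 0 := by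
  have hex : ∃ g : ℝ → ℂ, Continuous g ∧ ∀ t, Complex.exp (g t) = f t := ⟨g, hg, h⟩
  obtain ⟨hc, he⟩ := hex.choose_spec
  have hf0 (t : ℝ) : f t ≠ 0 := h t ▸ Complex.exp_ne_zero _
  have key := Complex.isCoveringMap_exp.const_of_comp (g := fun t => g t - hex.choose t)
    (hg.sub hc) (fun a a' => by simp [Complex.exp_sub, h, he, hf0]) 1 0
  rw [logIncrement, dif_pos hex]
  linear_combination -key

theorem logIncrement_neg {f : ℝ → ℂ} (hf : Continuous f) (h0 : ∀ t, f t ≠ 0) :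
    logIncrement (fun t => -f t) = logIncrement f := by
  obtain ⟨g, hg, h⟩ := exists_continuous_exp_eq hf h0
  rw [logIncrement_eq hg h, logIncrement_eq (g := fun t => g t + Real.pi * Complex.I)
    (by fun_prop) (fun t => by simp [Complex.exp_add, h])]
  ring

theorem exp_logIncrement {f : ℝ → ℂ} (hf : Continuous f) (h0 : ∀ t, f t ≠ 0) :
    Complex.exp (logIncrement f) = f 1 / f 0 := by
  obtain ⟨g, hg, h⟩ := exists_continuous_exp_eq hf h0
  rw [logIncrement_eq hg h, Complex.exp_sub, h, h]

/-- For two disjoint curves, the difference of their points has no winding along the boundary of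
the unit square. -/
theorem logIncrement_add_logIncrement {γ δ : ℝ → ℂ} (hγ : Continuous γ) (hδ : Continuous δ)
    (h : ∀ s t, γ s ≠ δ t) :
    logIncrement (fun s => γ s - δ 0) + logIncrement (fun t => δ t - γ 1) =
      logIncrement (fun s => γ s - δ 1) + logIncrement (fun t => δ t - γ 0) := by
  obtain ⟨G, hG, hexp⟩ := exists_continuous_exp_eq (A := ℝ × ℝ) (f := fun x => γ x.1 - δ x.2)
    (by fun_prop) (fun x => sub_ne_zero.2 (h _ _))
  have side (t : ℝ) : logIncrement (fun s => γ s - δ t) = G (1, t) - G (0, t) :=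
    logIncrement_eq (g := fun s => G (s, t)) (by fun_prop) fun s => hexp (s, t)
  have side' (s : ℝ) : logIncrement (fun t => δ t - γ s) = G (s, 1) - G (s, 0) := by
    rw [← logIncrement_neg (by fun_prop) fun t => sub_ne_zero.2 (h s t).symm]
    exact logIncrement_eq (g := fun t => G (s, t)) (by fun_prop)
      fun t => (hexp (s, t)).trans (neg_sub _ _).symm
  rw [side, side, side', side']
  ring

/-- The curves joining five points pairwise cannot be such that any two of them without a common
endpoint are disjoint. -/
theorem false_of_five_points (p : Fin 5 → ℂ) (c : Fin 5 → Fin 5 → ℝ → ℂ)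
    (hc : ∀ i j, i ≠ j → Continuous (c i j)) (h0 : ∀ i j, i ≠ j → c i j 0 = p i)
    (h1 : ∀ i j, i ≠ j → c i j 1 = p j)
    (hd : ∀ i j k l, i ≠ j → k ≠ l → i ≠ k → i ≠ l → j ≠ k → j ≠ l → ∀ s t, c i j s ≠ c k l t) :
    False := by
  have hne (i j k : Fin 5) (hij : i ≠ j) (hik : i ≠ k) (hjk : j ≠ k) (t : ℝ) :
      c i j t - p k ≠ 0 := by
    obtain ⟨l, hli, hlj, hlk⟩ : ∃ l, l ≠ i ∧ l ≠ j ∧ l ≠ k := by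
      clear hij hik hjk; decide +revert
    rw [← h0 k l hlk.symm]
    exact sub_ne_zero.2 (hd i j k l hij hlk.symm hik hli.symm hjk hlj.symm t 0)
  have hp (i k : Fin 5) (hik : i ≠ k) : p i - p k ≠ 0 := by
    obtain ⟨j, hji, hjk⟩ : ∃ j, j ≠ i ∧ j ≠ k := by clear hik; decide +revert
    rw [← h0 i j hji.symm]
    exact hne i j k hji.symm hik hjk 0
  let θ (i k : Fin 5) : ℂ :=
    if k < i then Complex.log (p i - p k) else Complex.log (p k - p i) + Real.pi * Complex.I
  let ε (i k : Fin 5) : ℤ := if k < i then -1 else 1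
  have hθ (i k : Fin 5) (hik : i ≠ k) : Complex.exp (θ i k) = p i - p k := by
    by_cases h : k < i
    · simp [θ, h, Complex.exp_log (hp i k hik)]
    · simp [θ, h, Complex.exp_add, Complex.exp_log (hp k i hik.symm)]
  have hε (i k : Fin 5) (hik : i ≠ k) : θ i k - θ k i = ε i k * (Real.pi * Complex.I) := by
    rcases hik.lt_or_gt with h | h <;> simp [θ, ε, h, h.not_gt]
  have hw (i j k : Fin 5) : ∃ n : ℤ, i ≠ j → i ≠ k → j ≠ k →
      logIncrement (fun t => c i j t - p k) =
        θ j k - θ i k + n * (2 * Real.pi * Complex.I) := by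
    by_cases h : i ≠ j ∧ i ≠ k ∧ j ≠ k
    · obtain ⟨hij, hik, hjk⟩ := h
      have hcc := hc i j hij
      have := exp_logIncrement (f := fun t => c i j t - p k) (by fun_prop) (hne i j k hij hik hjk)
      rw [h0 i j hij, h1 i j hij, ← hθ i k hik, ← hθ j k hjk, ← Complex.exp_sub,
        Complex.exp_eq_exp_iff_exists_int] at this
      exact this.imp fun n hn _ _ _ => hn
    · exact ⟨0, fun h1 h2 h3 => absurd ⟨h1, h2, h3⟩ h⟩
  choose n hn using hw
  have key (i j k l : Fin 5) (hij : i ≠ j) (hkl : k ≠ l) (hik : i ≠ k) (hil : i ≠ l) (hjk : j ≠ k)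
      (hjl : j ≠ l) :
      2 * (n i j k + n k l j - n i j l - n k l i) = ε i k + ε j l - ε j k - ε i l := by
    have h := logIncrement_add_logIncrement (hc i j hij) (hc k l hkl)
      (hd i j k l hij hkl hik hil hjk hjl)
    rw [h0 k l hkl, h1 k l hkl, h0 i j hij, h1 i j hij, hn i j k hij hik hjk,
      hn i j l hij hil hjl, hn k l j hkl hjk.symm hjl.symm, hn k l i hkl hik.symm hil.symm] at h
    have e1 := hε i k hik
    have e2 := hε j l hjl
    have e3 := hε j k hjk
    have e4 := hε i l hil
    have hpi : (Real.pi * Complex.I : ℂ) ≠ 0 := by simp [Real.pi_ne_zero]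
    have : ((2 * (n i j k + n k l j - n i j l - n k l i) : ℤ) : ℂ) * (Real.pi * Complex.I) =
        ((ε i k + ε j l - ε j k - ε i l : ℤ) : ℂ) * (Real.pi * Complex.I) := by
      push_cast
      linear_combination h + e1 + e2 - e3 - e4
    exact_mod_cast mul_right_cancel₀ hpi this
  have k1 := key 0 1 2 3
  have k2 := key 0 1 2 4
  have k3 := key 0 1 3 4
  have k4 := key 0 2 1 3
  have k5 := key 0 2 1 4
  have k6 := key 0 2 3 4
  have k7 := key 0 3 1 2
  have k8 := key 0 3 1 4
  have k9 := key 0 3 2 4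
  have k10 := key 0 4 1 2
  have k11 := key 0 4 1 3
  have k12 := key 0 4 2 3
  have k13 := key 1 2 3 4
  have k14 := key 1 3 2 4
  have k15 := key 1 4 2 3
  simp [ε] at k1 k2 k3 k4 k5 k6 k7 k8 k9 k10 k11 k12 k13 k14 k15
  omega

/-- Vertices are points of the plane, adjacent vertices can be joined inside prescribed sets, and
the sets of two edges without a common vertex are disjoint. -/
def HasSeparatedDrawing {V : Type*} (G : SimpleGraph V) : Prop :=
  ∃ (p : V → ℂ) (J : V → V → Set ℂ), (∀ u v, G.Adj u v → JoinedIn (J u v) (p u) (p v)) ∧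
    ∀ u v w z, G.Adj u v → G.Adj w z → u ≠ w → u ≠ z → v ≠ w → v ≠ z → Disjoint (J u v) (J w z)

/-- The graph obtained by contracting the edge `uv` to the vertex `u`; `v` becomes isolated. -/
def SimpleGraph.contractEdge {V : Type*} (G : SimpleGraph V) (u v : V) : SimpleGraph V where
  Adj a b := a ≠ b ∧ a ≠ v ∧ b ≠ v ∧ (G.Adj a b ∨ (a = u ∧ G.Adj v b) ∨ (b = u ∧ G.Adj a v))
  symm := ⟨fun a b ⟨h1, h2, h3, h4⟩ => ⟨h1.symm, h3, h2, by
    rcases h4 with h | ⟨h, h'⟩ | ⟨h, h'⟩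
    exacts [.inl h.symm, .inr (.inr ⟨h, h'.symm⟩), .inr (.inl ⟨h, h'.symm⟩)]⟩⟩
  loopless := ⟨fun _ h => h.1 rfl⟩

namespace HasSeparatedDrawing

variable {V : Type*} {G : SimpleGraph V}

theorem mono {H : SimpleGraph V} (hG : HasSeparatedDrawing G) (h : H ≤ G) :
    HasSeparatedDrawing H := by
  obtain ⟨p, J, hJ, hd⟩ := hG
  exact ⟨p, J, fun u v a => hJ u v (h a), fun u v w z a b => hd u v w z (h a) (h b)⟩

theorem cliqueFree_five (hG : HasSeparatedDrawing G) : G.CliqueFree 5 := by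
  intro s hs
  have hcf : ¬ G.CliqueFree 5 := hs.not_cliqueFree
  obtain ⟨p, J, hJ, hd⟩ := hG
  let f := SimpleGraph.topEmbeddingOfNotCliqueFree hcf
  have hadj (i j : Fin 5) (h : i ≠ j) : G.Adj (f i) (f j) := f.map_rel_iff.2 h
  have hpath (i j : Fin 5) : ∃ c : ℝ → ℂ, i ≠ j → Continuous c ∧ c 0 = p (f i) ∧ c 1 = p (f j) ∧
      ∀ t, c t ∈ J (f i) (f j) := by
    by_cases h : i = j
    · exact ⟨0, fun h' => absurd h h'⟩
    · have hj := hJ _ _ (hadj i j h)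
      refine ⟨hj.somePath.extend, fun _ => ⟨hj.somePath.continuous_extend, by simp, by simp,
        fun t => ?_⟩⟩
      exact hj.somePath_mem _
  choose c hc using hpath
  refine false_of_five_points (fun i => p (f i)) c (fun i j h => (hc i j h).1)
    (fun i j h => (hc i j h).2.1) (fun i j h => (hc i j h).2.2.1) ?_
  intro i j k l hij hkl hik hil hjk hjl s t
  exact (hd _ _ _ _ (hadj i j hij) (hadj k l hkl) (f.injective.ne hik) (f.injective.ne hil)
    (f.injective.ne hjk) (f.injective.ne hjl)).ne_of_mem ((hc i j hij).2.2.2 s)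
    ((hc k l hkl).2.2.2 t)

theorem contractEdge (hG : HasSeparatedDrawing G) {u v : V} (huv : G.Adj u v) :
    HasSeparatedDrawing (G.contractEdge u v) := by
  classical
  obtain ⟨p, J, hJ, hd⟩ := hG
  let J' (a b : V) : Set ℂ := if G.Adj a b then J a b else
    if a = u then J u v ∪ J v b else J u v ∪ J a v
  have hmem (a b : V) (h : (G.contractEdge u v).Adj a b) (z : ℂ) (hz : z ∈ J' a b) :
      ∃ x y, G.Adj x y ∧ z ∈ J x y ∧ (x = a ∨ x = b ∨ ((x = u ∨ x = v) ∧ (a = u ∨ b = u))) ∧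
        (y = a ∨ y = b ∨ ((y = u ∨ y = v) ∧ (a = u ∨ b = u))) := by
    obtain ⟨h1, h2, h3, h4⟩ := h
    simp only [J'] at hz
    split_ifs at hz with ha hu
    · exact ⟨a, b, ha, hz, by simp, by simp⟩
    · rcases hz with hz | hz
      · exact ⟨u, v, huv, hz, by simp [hu], by simp [hu]⟩
      · exact ⟨v, b, by grind, hz, by simp [hu], by simp⟩
    · rcases hz with hz | hz
      · exact ⟨u, v, huv, hz, by grind, by grind⟩
      · exact ⟨a, v, by grind, hz, by simp, by grind⟩
  refine ⟨p, J', ?_, ?_⟩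
  · rintro a b ⟨h1, h2, h3, h4⟩
    simp only [J']
    split_ifs with ha hu
    · exact hJ a b ha
    · subst hu
      exact ((hJ a v huv).mono subset_union_left).trans
        ((hJ v b (by grind)).mono subset_union_right)
    · obtain ⟨rfl, h⟩ : b = u ∧ G.Adj a v := by grind
      exact ((hJ a v h).mono subset_union_right).trans
        ((hJ b v huv).symm.mono subset_union_left)
  · intro a b c d hab hcd hac had hbc hbd
    refine Set.disjoint_left.2 fun z hz hz' => ?_
    obtain ⟨x, y, hxy, hzx, hx, hy⟩ := hmem a b hab z hz
    obtain ⟨x', y', hxy', hzx', hx', hy'⟩ := hmem c d hcd z hz'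
    have hab' := hab.2
    have hcd' := hcd.2
    exact Set.disjoint_left.1 (hd x y x' y' hxy hxy' (by grind) (by grind) (by grind) (by grind))
      hzx hzx'

end HasSeparatedDrawing

namespace SimpleGraph

variable {V : Type*} [Finite V] (G : SimpleGraph V)

theorem ncard_edgeSet_eq_deleteIncidenceSet_add (v : V) :
    G.edgeSet.ncard = (G.deleteIncidenceSet v).edgeSet.ncard + (G.neighborSet v).ncard := by
  classical
  have := Fintype.ofFinite V
  have h1 := G.card_edgeFinset_deleteIncidenceSet v
  have h2 := G.degree_le_card_edgeFinset v
  rw [← coe_edgeFinset, ← coe_edgeFinset, ← coe_neighborFinset, ncard_coe_finset, ncard_coe_finset,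
    ncard_coe_finset, card_neighborFinset_eq_degree]
  omega

theorem ncard_edgeSet_le_contractEdge {u v : V} (huv : G.Adj u v) :
    G.edgeSet.ncard ≤ (G.contractEdge u v).edgeSet.ncard + 1 +
      (G.neighborSet u ∩ G.neighborSet v).ncard := by
  have hH : (G.contractEdge u v).deleteIncidenceSet u =
      (G.deleteIncidenceSet v).deleteIncidenceSet u := by
    ext a b
    simp only [deleteIncidenceSet_adj, contractEdge]
    have := fun h : G.Adj a b => h.ne
    tauto
  have e1 := G.ncard_edgeSet_eq_deleteIncidenceSet_add v
  have e2 := (G.deleteIncidenceSet v).ncard_edgeSet_eq_deleteIncidenceSet_add u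
  have e3 := (G.contractEdge u v).ncard_edgeSet_eq_deleteIncidenceSet_add u
  have d2 : (G.deleteIncidenceSet v).neighborSet u = G.neighborSet u \ {v} := by
    ext b
    simp only [mem_neighborSet, deleteIncidenceSet_adj, mem_sdiff, mem_singleton_iff]
    have := huv.ne
    tauto
  have d3 : (G.contractEdge u v).neighborSet u =
      ((G.neighborSet u ∪ G.neighborSet v) \ {u}) \ {v} := by
    ext b
    simp only [mem_neighborSet, contractEdge, mem_sdiff, mem_singleton_iff, mem_union]
    have := huv.ne
    have := fun h : G.Adj u b => h.ne
    grind
  have hvu : v ∈ G.neighborSet u := huv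
  have huv' : u ∈ G.neighborSet v := huv.symm
  have huni := ncard_union_add_ncard_inter (G.neighborSet u) (G.neighborSet v)
  have c2 := ncard_sdiff_singleton_add_one hvu
  have c3 := ncard_sdiff_singleton_add_one
    (show v ∈ (G.neighborSet u ∪ G.neighborSet v) \ {u} from ⟨.inl hvu, huv.ne'⟩)
  have c4 := ncard_sdiff_singleton_add_one
    (show u ∈ G.neighborSet u ∪ G.neighborSet v from .inr huv')
  rw [← d2] at c2
  rw [← d3] at c3
  rw [← hH] at e2
  omega

end SimpleGraph

namespace HasSeparatedDrawing

variable {V : Type*} {G : SimpleGraph V}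

/-- A vertex of degree at most five has a neighbor with which it shares at most two neighbors. -/
theorem exists_neighbor_ncard_inter_le [Finite V] (hG : HasSeparatedDrawing G) {v : V}
    (hpos : 0 < (G.neighborSet v).ncard) (hle : (G.neighborSet v).ncard ≤ 5) :
    ∃ w, G.Adj v w ∧ (G.neighborSet v ∩ G.neighborSet w).ncard ≤ 2 := by
  classical
  have := Fintype.ofFinite V
  simp only [← SimpleGraph.coe_neighborFinset, ← Finset.coe_inter, ncard_coe_finset] at hpos hle ⊢
  by_contra! hcon
  set N := G.neighborFinset v with hN
  have hmem (w : V) : w ∈ N ↔ G.Adj v w := by simp [hN]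
  have hself (w : V) : w ∉ G.neighborFinset w := by simp
  have hsub (w : V) (hw : w ∈ N) : N ∩ G.neighborFinset w ⊆ N.erase w := by
    intro x hx
    have := hself w
    grind
  obtain ⟨w₀, hw₀⟩ := Finset.card_pos.1 hpos
  have h4 : 4 ≤ N.card := by
    have h1 := hcon w₀ ((hmem _).1 hw₀)
    have h2 := Finset.card_le_card (hsub w₀ hw₀)
    rw [Finset.card_erase_of_mem hw₀] at h2
    omega
  obtain h4 | h5 : N.card = 4 ∨ N.card = 5 := by omega
  · refine hG.cliqueFree_five (insert v N) (SimpleGraph.IsNClique.insert ⟨?_, h4⟩ ?_)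
    · intro x hx y hy hxy
      have heq : N ∩ G.neighborFinset x = N.erase x := by
        refine Finset.eq_of_subset_of_card_le (hsub x hx) ?_
        rw [Finset.card_erase_of_mem hx, h4]
        exact hcon x ((hmem x).1 hx)
      have : y ∈ N.erase x := Finset.mem_erase.2 ⟨hxy.symm, hy⟩
      rw [← heq] at this
      simpa using (Finset.mem_inter.1 this).2
    · exact fun w hw => (hmem w).1 hw
  · have hor (x y z : V) (hx : x ∈ N) (hy : y ∈ N) (hz : z ∈ N) (hxy : x ≠ y) (hxz : x ≠ z)
        (hyz : y ≠ z) : G.Adj x y ∨ G.Adj x z := by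
      by_contra! h
      have hs : N ∩ G.neighborFinset x ⊆ ((N.erase x).erase y).erase z := by
        intro w hw
        have h1 := hsub x hx hw
        have h2 : G.Adj x w := by simpa using (Finset.mem_inter.1 hw).2
        grind
      have h2 := Finset.card_le_card hs
      have h3 := hcon x ((hmem x).1 hx)
      rw [Finset.card_erase_of_mem (by grind), Finset.card_erase_of_mem (by grind),
        Finset.card_erase_of_mem hx] at h2
      omega
    obtain ⟨c, hc, c', hc', hcc, hall⟩ : ∃ c ∈ N, ∃ c' ∈ N, c ≠ c' ∧
        ∀ x ∈ N, x ≠ c → x ≠ c' → G.Adj c x ∧ G.Adj c' x := by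
      by_cases h : ∃ c ∈ N, ∃ c' ∈ N, c ≠ c' ∧ ¬ G.Adj c c'
      · obtain ⟨c, hc, c', hc', hcc, hn⟩ := h
        refine ⟨c, hc, c', hc', hcc, fun x hx h1 h2 => ?_⟩
        have hn' : ¬ G.Adj c' c := fun h => hn h.symm
        exact ⟨(hor c c' x hc hc' hx hcc h1.symm h2.symm).resolve_left hn,
          (hor c' c x hc' hc hx hcc.symm h2.symm h1.symm).resolve_left hn'⟩
      · push Not at h
        obtain ⟨c, hc, c', hc', hcc⟩ := Finset.one_lt_card.1 (show 1 < N.card by omega)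
        exact ⟨c, hc, c', hc', hcc, fun x hx h1 h2 => ⟨h c hc x hx h1.symm, h c' hc' x hx h2.symm⟩⟩
    obtain ⟨x, y, z, hxy, hxz, hyz, hN3⟩ :=
      Finset.card_eq_three.1 (show ((N.erase c).erase c').card = 3 by
        rw [Finset.card_erase_of_mem (by grind), Finset.card_erase_of_mem hc, h5])
    have hx : x ∈ (N.erase c).erase c' := by simp [hN3]
    have hy : y ∈ (N.erase c).erase c' := by simp [hN3]
    have hz : z ∈ (N.erase c).erase c' := by simp [hN3]
    simp only [Finset.mem_erase] at hx hy hz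
    obtain ⟨a, b, d, ha, hb, hd, hab, had, hbd⟩ : ∃ a b d, (a ≠ c' ∧ a ≠ c ∧ a ∈ N) ∧
        (b ≠ c' ∧ b ≠ c ∧ b ∈ N) ∧ (d ≠ c' ∧ d ≠ c ∧ d ∈ N) ∧ a ≠ b ∧ a ≠ d ∧ G.Adj b d := by
      rcases hor x y z hx.2.2 hy.2.2 hz.2.2 hxy hxz hyz with h | h
      · exact ⟨z, x, y, hz, hx, hy, hxz.symm, hyz.symm, h⟩
      · exact ⟨y, x, z, hy, hx, hz, hxy.symm, hyz, h⟩
    have hca := hall a ha.2.2 ha.2.1 ha.1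
    have hcb := hall b hb.2.2 hb.2.1 hb.1
    have hcd := hall d hd.2.2 hd.2.1 hd.1
    have hva := (hmem a).1 ha.2.2
    have hvb := (hmem b).1 hb.2.2
    have hvd := (hmem d).1 hd.2.2
    have hvc := (hmem c).1 hc
    have hvc' := (hmem c').1 hc'
    have hbd' := hbd.ne
    have h1 := hva.ne
    have h2 := hvb.ne
    have h3 := hvc'.ne
    have h4 := hvd.ne
    have h5 := hvc.ne
    have h6 := hca.2.symm
    have h7 := hcc.symm
    clear hor hcon hall hsub
    refine (hG.contractEdge hca.1.symm).cliqueFree_five {v, a, c', b, d} ?_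
    rw [SimpleGraph.isNClique_iff]
    refine ⟨?_, ?_⟩
    · simp only [Finset.coe_insert, Finset.coe_singleton, SimpleGraph.isClique_insert,
        SimpleGraph.contractEdge]
      simp
      grind
    · simp [h1, h2, h3, h4, ha, hab, had, hbd', hb.1.symm, hd.1.symm]

theorem ncard_edgeSet_le [Finite V] (n : ℕ) {G : SimpleGraph V} {S : Finset V}
    (hG : HasSeparatedDrawing G) (hS : ∀ a b, G.Adj a b → a ∈ S) (hn : S.card = n + 1) :
    G.edgeSet.ncard ≤ 3 * n + 1 := by
  classical
  have := Fintype.ofFinite V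
  induction n generalizing G S with
  | zero =>
    obtain ⟨x, rfl⟩ := Finset.card_eq_one.1 hn
    have : G = ⊥ := by
      ext a b
      simp only [SimpleGraph.bot_adj, iff_false]
      intro h
      have h1 := hS a b h
      have h2 := hS b a h.symm
      have := h.ne
      simp_all
    subst this
    simp
  | succ n ih =>
    by_contra! hlt
    obtain ⟨F, hF, hFc⟩ := exists_subset_card_eq (show 3 * n + 5 ≤ G.edgeSet.ncard by omega)
    have hle : SimpleGraph.fromEdgeSet F ≤ G := by
      rw [← SimpleGraph.fromEdgeSet_edgeSet G]
      exact SimpleGraph.fromEdgeSet_mono hF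
    generalize hH : SimpleGraph.fromEdgeSet F = H at hle
    have hHc : H.edgeSet.ncard = 3 * n + 5 := by
      rw [← hFc, ← hH, SimpleGraph.edgeSet_fromEdgeSet]
      congr 1
      ext e
      have : e ∈ F → ¬ e.IsDiag := fun he => G.not_isDiag_of_mem_edgeSet (hF he)
      simp
      tauto
    have hHS (a b : V) (h : H.Adj a b) : a ∈ S := hS a b (hle h)
    have hHd := hG.mono hle
    have hsum : ∑ v ∈ S, (H.neighborSet v).ncard = 6 * n + 10 := by
      simp only [← SimpleGraph.coe_neighborFinset, ncard_coe_finset,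
        SimpleGraph.card_neighborFinset_eq_degree]
      rw [Finset.sum_subset (Finset.subset_univ S), H.sum_degrees_eq_twice_card_edges,
        ← ncard_coe_finset, SimpleGraph.coe_edgeFinset, hHc]
      · ring
      · intro x _ hx
        rw [← SimpleGraph.card_neighborFinset_eq_degree, Finset.card_eq_zero,
          Finset.eq_empty_iff_forall_notMem]
        exact fun y hy => hx (hHS x y (by simpa using hy))
    obtain ⟨v, hv, hdeg⟩ : ∃ v ∈ S, (H.neighborSet v).ncard ≤ 5 := by
      by_contra! h
      have := Finset.card_nsmul_le_sum S _ 6 fun v hv => h v hv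
      rw [hn, hsum, smul_eq_mul] at this
      omega
    have hSe : (S.erase v).card = n + 1 := by rw [Finset.card_erase_of_mem hv, hn]; rfl
    rcases Nat.eq_zero_or_pos (H.neighborSet v).ncard with h0 | hpos
    · have h1 := ih (hHd.mono (H.deleteIncidenceSet_le v)) (fun a b h => by
          rw [SimpleGraph.deleteIncidenceSet_adj] at h
          exact Finset.mem_erase.2 ⟨h.2.1, hHS a b h.1⟩) hSe
      have h2 := H.ncard_edgeSet_eq_deleteIncidenceSet_add v
      omega
    · obtain ⟨w, hvw, hw⟩ := hHd.exists_neighbor_ncard_inter_le hpos hdeg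
      have h1 := H.ncard_edgeSet_le_contractEdge hvw.symm
      have h2 := ih (hHd.contractEdge hvw.symm) (by
        rintro a b ⟨h1, h2, h3, h4⟩
        refine Finset.mem_erase.2 ⟨h2, ?_⟩
        rcases h4 with h | ⟨rfl, h⟩ | ⟨rfl, h⟩
        exacts [hHS a b h, hHS a v hvw.symm, hHS a v h]) hSe
      rw [inter_comm] at h1
      omega

end HasSeparatedDrawing

theorem sum_card_filter_forall_mem {ι κ α : Type*} [Fintype ι] [DecidableEq ι] [Fintype κ]
    [Nonempty κ] [DecidableEq κ] (A : Finset α) (T : α → Finset ι) (s : α → ι → Finset κ) (d q : ℕ)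
    (hT : ∀ a ∈ A, (T a).card = d) (hs : ∀ a ∈ A, ∀ i ∈ T a, (s a i).card = q) :
    ∑ f : ι → κ, ((A.filter fun a => ∀ i ∈ T a, f i ∈ s a i).card : ℝ) =
      (Fintype.card κ : ℝ) ^ Fintype.card ι * (A.card * (q / Fintype.card κ) ^ d) := by
  have hN : (Fintype.card κ : ℝ) ≠ 0 := by simp
  have hcount (a : α) (ha : a ∈ A) :
      ∑ f : ι → κ, (if ∀ i ∈ T a, f i ∈ s a i then (1 : ℝ) else 0) =
        (Fintype.card κ : ℝ) ^ Fintype.card ι * (q / Fintype.card κ) ^ d := by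
    have hset : (Finset.univ.filter fun f : ι → κ => ∀ i ∈ T a, f i ∈ s a i) =
        Fintype.piFinset fun i => if i ∈ T a then s a i else Finset.univ := by
      ext f
      simp only [Finset.mem_filter, Finset.mem_univ, true_and, Fintype.mem_piFinset]
      refine forall_congr' fun i => ?_
      split_ifs with h <;> simp [h]
    have hin : ∏ i ∈ T a, ((if i ∈ T a then s a i else Finset.univ).card : ℝ) = (q : ℝ) ^ d := by
      rw [← hT a ha, ← Finset.prod_const]
      exact Finset.prod_congr rfl fun i hi => by rw [if_pos hi, hs a ha i hi]
    have hout : ∏ i ∈ (T a)ᶜ, ((if i ∈ T a then s a i else Finset.univ).card : ℝ) =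
        (Fintype.card κ : ℝ) ^ (T a)ᶜ.card := by
      rw [← Finset.prod_const]
      exact Finset.prod_congr rfl fun i hi => by
        rw [if_neg (Finset.mem_compl.1 hi), Finset.card_univ]
    rw [Finset.sum_boole, hset, Fintype.card_piFinset, Nat.cast_prod,
      ← Finset.prod_mul_prod_compl (T a), hin, hout, ← Finset.card_add_card_compl (T a), hT a ha,
      div_pow, pow_add]
    field_simp
  simp only [Finset.card_filter, Nat.cast_sum, Nat.cast_ite, Nat.cast_one, Nat.cast_zero]
  rw [Finset.sum_comm, Finset.sum_congr rfl hcount, Finset.sum_const, nsmul_eq_mul]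
  ring

/-- The ends of an edge as a finite set. -/
def endSet {V E : Type*} [DecidableEq V] (ends : E → V × V) (e : E) : Finset V :=
  {(ends e).1, (ends e).2}

/-- The unordered pair of ends of an edge. -/
def edgeSym {V E : Type*} (ends : E → V × V) (e : E) : Sym2 V :=
  s((ends e).1, (ends e).2)

theorem card_le_three_mul_add {V E : Type*} [DecidableEq V] [DecidableEq E] {ends : E → V × V}
    {C : Finset (E × E)}
    (hplanar : ∀ (F : Finset E) (W : Finset V), InjOn (edgeSym ends) F →
      (∀ e ∈ F, endSet ends e ⊆ W) → (∀ x ∈ C, x.1 ∈ F → x.2 ∉ F) → F.card ≤ 3 * W.card)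
    (F : Finset E) (W : Finset V) (hinj : InjOn (edgeSym ends) F)
    (hW : ∀ e ∈ F, endSet ends e ⊆ W) :
    F.card ≤ 3 * W.card + (C.filter fun x => x.1 ∈ F ∧ x.2 ∈ F).card := by
  set D := C.filter fun x => x.1 ∈ F ∧ x.2 ∈ F
  have h1 := hplanar (F \ D.image Prod.fst) W (hinj.mono (by simp))
    (fun e he => hW e (Finset.mem_sdiff.1 he).1) (fun x hx h1 h2 => by
      rw [Finset.mem_sdiff] at h1 h2
      exact h1.2 (Finset.mem_image_of_mem _ (Finset.mem_filter.2 ⟨hx, h1.1, h2.1⟩)))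
  have h2 := Finset.le_card_sdiff (D.image Prod.fst) F
  have h3 : (D.image Prod.fst).card ≤ D.card := Finset.card_image_le
  omega

/-- Choosing one edge at random from each class of parallel edges. -/
theorem mul_card_le_of_parallel_le {V E : Type*} [Fintype V] [DecidableEq V] [Fintype E]
    [DecidableEq E] {ends : E → V × V} {C : Finset (E × E)} {m : ℕ}
    (hC : ∀ x ∈ C, Disjoint (endSet ends x.1) (endSet ends x.2))
    (hm0 : 0 < m) (hm : ∀ z : Sym2 V, (Finset.univ.filter fun e => edgeSym ends e = z).card ≤ m)
    (hplanar : ∀ (F : Finset E) (W : Finset V), InjOn (edgeSym ends) F →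
      (∀ e ∈ F, endSet ends e ⊆ W) → (∀ x ∈ C, x.1 ∈ F → x.2 ∉ F) → F.card ≤ 3 * W.card)
    (W : Finset V) :
    (m : ℝ) * (Finset.univ.filter fun e => endSet ends e ⊆ W).card ≤ 3 * m ^ 2 * W.card +
      (C.filter fun x => endSet ends x.1 ∪ endSet ends x.2 ⊆ W).card := by
  set b : E → Sym2 V := edgeSym ends
  have : NeZero m := ⟨hm0.ne'⟩
  obtain ⟨r, hr⟩ : ∃ r : E → Fin m, ∀ e f, b e = b f → r e = r f → e = f := by
    have hg (z : Sym2 V) : Nonempty ({e // b e = z} ↪ Fin m) :=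
      Function.Embedding.nonempty_of_card_le (by
        rw [Fintype.card_subtype, Fintype.card_fin]
        exact hm z)
    let g (z : Sym2 V) : {e // b e = z} ↪ Fin m := (hg z).some
    refine ⟨fun e => g (b e) ⟨e, rfl⟩, fun e f hef h => ?_⟩
    have htr : ∀ z (hz : b f = z), g (b f) ⟨f, rfl⟩ = g z ⟨f, hz⟩ := by
      rintro _ rfl
      rfl
    simp only at h
    rw [htr (b e) hef.symm] at h
    exact congrArg Subtype.val ((g (b e)).injective h)
  set A := Finset.univ.filter fun e => endSet ends e ⊆ W
  set D := C.filter fun x => endSet ends x.1 ∪ endSet ends x.2 ⊆ W with hD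
  have hb (x : E × E) (hx : x ∈ C) : b x.1 ≠ b x.2 := by
    intro h
    have h1 := Finset.disjoint_left.1 (hC x hx)
    have h2 : (ends x.1).1 ∈ b x.2 := h ▸ Sym2.mem_mk_left _ _
    exact h1 (a := (ends x.1).1) (by simp [endSet]) (by simpa [endSet, b, edgeSym] using h2)
  have hA := sum_card_filter_forall_mem (κ := Fin m) A (fun e => {b e}) (fun e _ => {r e}) 1 1
    (by simp) (by simp)
  have hDs := sum_card_filter_forall_mem (κ := Fin m) D (fun x => {b x.1, b x.2})
    (fun x z => if z = b x.1 then {r x.1} else {r x.2}) 2 1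
    (fun x hx => Finset.card_pair (hb x (Finset.mem_filter.1 hx).1))
    (fun x hx i _ => by split_ifs <;> simp)
  have hle (φ : Sym2 V → Fin m) :
      ((A.filter fun e => ∀ i ∈ ({b e} : Finset (Sym2 V)), φ i ∈ ({r e} : Finset (Fin m))).card : ℝ)
        ≤ 3 * W.card + (D.filter fun x => ∀ i ∈ ({b x.1, b x.2} : Finset (Sym2 V)),
          φ i ∈ (if i = b x.1 then {r x.1} else {r x.2} : Finset (Fin m))).card := by
    norm_cast
    refine (card_le_three_mul_add hplanar _ W ?_ ?_).trans
      (Nat.add_le_add_left (Finset.card_le_card ?_) _)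
    · intro e he f hf hef
      simp only [Finset.coe_filter, Finset.mem_singleton, forall_eq, mem_ofPred_eq] at he hf
      exact hr e f hef (by rw [← he.2, ← hf.2]; exact congrArg φ hef)
    · intro e he
      simp only [A, Finset.mem_filter] at he
      exact he.1.2
    · intro x hx
      simp only [A, Finset.mem_filter, Finset.mem_univ, true_and, Finset.mem_singleton,
        forall_eq] at hx
      simp [hD, hx, Finset.union_subset_iff, (hb x hx.1).symm]
  have hsum := Finset.sum_le_sum fun φ (_ : φ ∈ (Finset.univ : Finset (Sym2 V → Fin m))) => hle φ
  rw [Finset.sum_add_distrib, hA, hDs, Finset.sum_const, nsmul_eq_mul, Finset.card_univ,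
    Fintype.card_fun] at hsum
  simp only [Fintype.card_fin, Nat.cast_pow, ← mul_add, Nat.cast_one] at hsum
  have hm0' : (0 : ℝ) < m := by exact_mod_cast hm0
  have h := le_of_mul_le_mul_left hsum (by positivity)
  have h' := mul_le_mul_of_nonneg_left h (sq_nonneg (m : ℝ))
  field_simp at h'
  linarith

theorem card_pow_three_le {V E : Type*} [Fintype V] [DecidableEq V] [Fintype E] [DecidableEq E]
    {ends : E → V × V} {C : Finset (E × E)} {m : ℕ}
    (hne : ∀ e, (ends e).1 ≠ (ends e).2)
    (hC : ∀ x ∈ C, Disjoint (endSet ends x.1) (endSet ends x.2))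
    (hm : ∀ z : Sym2 V, (Finset.univ.filter fun e => edgeSym ends e = z).card ≤ m)
    (hplanar : ∀ (F : Finset E) (W : Finset V), InjOn (edgeSym ends) F →
      (∀ e ∈ F, endSet ends e ⊆ W) → (∀ x ∈ C, x.1 ∈ F → x.2 ∉ F) → F.card ≤ 3 * W.card)
    (h4 : 4 * m * Fintype.card V ≤ Fintype.card E) :
    (Fintype.card E : ℝ) ^ 3 ≤ 64 * m * (Fintype.card V : ℝ) ^ 2 * C.card := by
  rcases isEmpty_or_nonempty E with hE | ⟨⟨e₀⟩⟩
  · simp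
    positivity
  have : Nonempty E := ⟨e₀⟩
  have hV : 0 < Fintype.card V := Fintype.card_pos_iff.2 ⟨(ends e₀).1⟩
  have hm0 : 0 < m :=
    (Finset.card_pos.2 ⟨e₀, by simp⟩).trans_le (hm (edgeSym ends e₀))
  have hcard (e : E) : (endSet ends e).card = 2 := Finset.card_pair (hne e)
  obtain ⟨K, -, hK⟩ := Finset.exists_subset_card_eq
    (show 4 * m * Fintype.card V ≤ (Finset.univ : Finset E).card from h4)
  have hsV := sum_card_filter_forall_mem (Finset.univ : Finset V) (fun v => {v}) (fun _ _ => K) 1 _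
    (by simp) (fun _ _ _ _ => hK)
  have hsE := sum_card_filter_forall_mem (Finset.univ : Finset E) (endSet ends) (fun _ _ => K) 2 _
    (fun e _ => hcard e) (fun _ _ _ _ => hK)
  have hsC := sum_card_filter_forall_mem C (fun x => endSet ends x.1 ∪ endSet ends x.2)
    (fun _ _ => K) 4 _ (fun x hx => by rw [Finset.card_union_of_disjoint (hC x hx), hcard, hcard])
    (fun _ _ _ _ => hK)
  have hle (ψ : V → E) := mul_card_le_of_parallel_le hC hm0 hm hplanar
    (Finset.univ.filter fun v => ∀ i ∈ ({v} : Finset V), ψ i ∈ K)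
  have hsub (ψ : V → E) (T : Finset V) :
      T ⊆ (Finset.univ.filter fun v => ∀ i ∈ ({v} : Finset V), ψ i ∈ K) ↔ ∀ i ∈ T, ψ i ∈ K := by
    simp [Finset.subset_iff]
  simp only [hsub] at hle
  have hsum := Finset.sum_le_sum fun ψ (_ : ψ ∈ (Finset.univ : Finset (V → E))) => hle ψ
  rw [Finset.sum_add_distrib, ← Finset.mul_sum, ← Finset.mul_sum, hsV, hsE, hsC] at hsum
  have hN : (0 : ℝ) < Fintype.card E := by exact_mod_cast Fintype.card_pos
  have hm0' : (0 : ℝ) < m := by exact_mod_cast hm0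
  have hV' : (0 : ℝ) < Fintype.card V := by exact_mod_cast hV
  simp only [Finset.card_univ, Nat.cast_mul, Nat.cast_ofNat] at hsum
  generalize hP : (Fintype.card E : ℝ) ^ Fintype.card V = P at hsum
  have hP0 : 0 < P := by rw [← hP]; positivity
  rw [← mul_assoc (_ : ℝ) P] at hsum
  have h : (m : ℝ) * (Fintype.card E * (4 * m * Fintype.card V / Fintype.card E) ^ 2) ≤
      3 * m ^ 2 * (Fintype.card V * (4 * m * Fintype.card V / Fintype.card E) ^ 1) +
        C.card * (4 * m * Fintype.card V / Fintype.card E) ^ 4 :=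
    le_of_mul_le_mul_left (by linarith) hP0
  field_simp at h
  linarith

/-- A simple subgraph of a drawn multigraph in which independent edges do not cross has at most
three times as many edges as vertices. -/
theorem card_le_three_mul_of_not_crossing {V E : Type*} [Finite V] [DecidableEq V]
    {vert : V → ℝ × ℝ} {ends : E → V × V} {γ : E → ℝ → ℝ × ℝ} (hvert : Function.Injective vert)
    (hcont : ∀ e, ContinuousOn (γ e) (Icc 0 1)) (hne : ∀ e, (ends e).1 ≠ (ends e).2)
    (hends : ∀ e, γ e 0 = vert (ends e).1 ∧ γ e 1 = vert (ends e).2)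
    (havoid : ∀ e, ∀ t ∈ Ioo (0 : ℝ) 1, γ e t ∉ range vert)
    {F : Finset E} {W : Finset V} (hinj : InjOn (edgeSym ends) F) (hW : ∀ e ∈ F, endSet ends e ⊆ W)
    (hF : ∀ e ∈ F, ∀ f ∈ F, Disjoint (endSet ends e) (endSet ends f) →
      ∀ t ∈ Ioo (0 : ℝ) 1, ∀ s ∈ Ioo (0 : ℝ) 1, γ e t ≠ γ f s) :
    F.card ≤ 3 * W.card := by
  let G := SimpleGraph.fromEdgeSet (edgeSym ends '' F)
  have hG : G.edgeSet = edgeSym ends '' F := by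
    rw [SimpleGraph.edgeSet_fromEdgeSet, sdiff_eq_left, disjoint_left]
    rintro _ ⟨e, -, rfl⟩
    exact hne e
  have hcard : G.edgeSet.ncard = F.card := by
    rw [hG, hinj.ncard_image, ncard_coe_finset]
  have hadj {u v : V} (h : G.Adj u v) : ∃ e ∈ F, edgeSym ends e = s(u, v) := by
    rw [← SimpleGraph.mem_edgeSet, hG] at h
    exact h
  have hmem {e : E} {u v : V} (h : edgeSym ends e = s(u, v)) : endSet ends e = {u, v} := by
    ext a
    rw [endSet, Finset.mem_insert, Finset.mem_singleton, Finset.mem_insert, Finset.mem_singleton,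
      ← Sym2.mem_iff, ← Sym2.mem_iff]
    exact h ▸ Iff.rfl
  let φ : (ℝ × ℝ) ≃L[ℝ] ℂ := Complex.equivRealProdCLM.symm
  have hcurve (e : E) : JoinedIn (φ '' (γ e '' Icc 0 1)) (φ (vert (ends e).1))
      (φ (vert (ends e).2)) := by
    have h : IsPathConnected (φ '' (γ e '' Icc 0 1)) :=
      (((convex_Icc (0 : ℝ) 1).isPathConnected ⟨0, by simp⟩).image' (hcont e)).image φ.continuous
    refine h.joinedIn _ (mem_image_of_mem _ ⟨0, by simp, (hends e).1⟩) _
      (mem_image_of_mem _ ⟨1, by simp, (hends e).2⟩)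
  have hpt (e : E) {t : ℝ} (ht : t ∈ Icc (0 : ℝ) 1) :
      t ∈ Ioo (0 : ℝ) 1 ∨ ∃ a ∈ endSet ends e, γ e t = vert a := by
    rcases ht.1.eq_or_lt with rfl | h0
    · exact Or.inr ⟨(ends e).1, by simp [endSet], (hends e).1⟩
    rcases ht.2.eq_or_lt with rfl | h1
    · exact Or.inr ⟨(ends e).2, by simp [endSet], (hends e).2⟩
    exact Or.inl ⟨h0, h1⟩
  have hdisj {e f : E} (he : e ∈ F) (hf : f ∈ F) (h : Disjoint (endSet ends e) (endSet ends f)) :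
      Disjoint (γ e '' Icc 0 1) (γ f '' Icc 0 1) := by
    rw [disjoint_left]
    rintro _ ⟨t, ht, rfl⟩ ⟨s, hs, hst⟩
    rcases hpt e ht with ht | ⟨a, ha, hat⟩ <;> rcases hpt f hs with hs | ⟨b, hb, hbs⟩
    · exact hF e he f hf h t ht s hs hst.symm
    · exact havoid e t ht ⟨b, by rw [← hst, hbs]⟩
    · exact havoid f s hs ⟨a, by rw [hst, hat]⟩
    · have hab : b = a := hvert (by rw [← hat, ← hst, hbs])
      exact Finset.disjoint_left.1 h ha (hab ▸ hb)
  have hsep : HasSeparatedDrawing G := by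
    refine ⟨fun v => φ (vert v),
      fun u v => ⋃ e ∈ {e | e ∈ F ∧ edgeSym ends e = s(u, v)}, φ '' (γ e '' Icc 0 1), ?_, ?_⟩
    · intro u v h
      obtain ⟨e, he, hev⟩ := hadj h
      have hsub := subset_biUnion_of_mem (u := fun e => φ '' (γ e '' Icc 0 1))
        (show e ∈ {e | e ∈ F ∧ edgeSym ends e = s(u, v)} from ⟨he, hev⟩)
      rcases Sym2.eq_iff.1 hev with ⟨rfl, rfl⟩ | ⟨rfl, rfl⟩
      · exact (hcurve e).mono hsub
      · exact (hcurve e).symm.mono hsub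
    · intro u v w z _ _ huw huz hvw hvz
      simp only [disjoint_iUnion_left, disjoint_iUnion_right]
      rintro e ⟨he, heu⟩ f ⟨hf, hfw⟩
      refine (disjoint_image_iff φ.injective).2 (hdisj ?_ ?_ ?_) <;> try assumption
      rw [hmem heu, hmem hfw]
      simp [huw, huz, hvw, hvz, Ne.symm]
  obtain hn | ⟨n, hn⟩ : W.card = 0 ∨ ∃ n, W.card = n + 1 := by
    cases W.card <;> simp
  · have : F = ∅ := Finset.eq_empty_of_forall_notMem fun e he => by
      have := hW e he
      rw [Finset.card_eq_zero.1 hn] at this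
      simp [endSet] at this
    simp [this]
  · have := hsep.ncard_edgeSet_le n (S := W) (fun a b h => by
      obtain ⟨e, he, hev⟩ := hadj h
      exact hW e he (by simp [hmem hev])) hn
    omega

/-- Crossing lemma for multigraphs (Székely). A drawing of a multigraph with
`Vn` vertices (`vert`), `En` edges, each edge `e` drawn as a curve `γ e` (continuous and
injective on `[0,1]`) joining its endpoint vertices and avoiding vertices in its interior,
with edge multiplicity at most `m` and `En ≥ 4 m Vn`: if the set of crossings (points
interior to two distinct edges, counted with the pair of edges) is finite, then its size is
at least `c·En³/(m·Vn²)` for an absolute constant `c > 0`. -/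
theorem stmt16 :
    ∃ c : ℝ, 0 < c ∧
      ∀ (Vn En m : ℕ) (vert : Fin Vn → ℝ × ℝ) (ends : Fin En → Fin Vn × Fin Vn)
        (γ : Fin En → ℝ → ℝ × ℝ),
        Function.Injective vert →
        (∀ e, ContinuousOn (γ e) (Icc 0 1)) →
        (∀ e, InjOn (γ e) (Icc 0 1)) →
        (∀ e, γ e 0 = vert (ends e).1 ∧ γ e 1 = vert (ends e).2) →
        (∀ e, ∀ t ∈ Ioo (0 : ℝ) 1, γ e t ∉ Set.range vert) →
        (∀ u v : Fin Vn,
          ({e : Fin En | ends e = (u, v) ∨ ends e = (v, u)}).ncard ≤ m) →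
        4 * m * Vn ≤ En →
        ∀ X : Set ((ℝ × ℝ) × Fin En × Fin En),
          X = {x | x.2.1 ≠ x.2.2 ∧
                (∃ t ∈ Ioo (0 : ℝ) 1, γ x.2.1 t = x.1) ∧
                (∃ s ∈ Ioo (0 : ℝ) 1, γ x.2.2 s = x.1)} →
          X.Finite →
          c * (En : ℝ) ^ 3 / ((m : ℝ) * (Vn : ℝ) ^ 2) ≤ X.ncard := by
  classical
  refine ⟨1 / 64, by norm_num, ?_⟩
  intro Vn En m vert ends γ hvert hcont hinj hends havoid hm h4 X hX hXfin
  have hne (e : Fin En) : (ends e).1 ≠ (ends e).2 := fun h =>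
    zero_ne_one (hinj e (by simp) (by simp) (by rw [(hends e).1, (hends e).2, h]))
  let C : Finset (Fin En × Fin En) := Finset.univ.filter fun x =>
    Disjoint (endSet ends x.1) (endSet ends x.2) ∧
      ∃ t ∈ Ioo (0 : ℝ) 1, ∃ s ∈ Ioo (0 : ℝ) 1, γ x.1 t = γ x.2 s
  have hCX : C.card ≤ X.ncard := by
    rw [← ncard_coe_finset]
    refine (ncard_le_ncard ?_ (hXfin.image Prod.snd)).trans (ncard_image_le hXfin)
    intro x hx
    obtain ⟨hd, t, ht, s, hs, hts⟩ := (Finset.mem_filter.1 hx).2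
    refine ⟨(γ x.1 t, x), ?_, rfl⟩
    rw [hX]
    refine ⟨fun h => ?_, ⟨t, ht, rfl⟩, s, hs, hts.symm⟩
    simp [show x.1 = x.2 from h, endSet] at hd
  have hmain := card_pow_three_le (C := C) (m := m) hne (fun x hx => (Finset.mem_filter.1 hx).2.1)
    (fun z => by
      induction z with | _ u v
      rw [← ncard_coe_finset]
      refine le_of_eq_of_le (congrArg ncard ?_) (hm u v)
      ext e
      simp [edgeSym, Prod.ext_iff])
    (fun F W hF hW hFC => card_le_three_mul_of_not_crossing hvert hcont hne hends havoid hF hW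
      fun e he f hf hd t ht s hs hts => hFC (e, f)
        (Finset.mem_filter.2 ⟨Finset.mem_univ _, hd, t, ht, s, hs, hts⟩) he hf)
    (by simpa using h4)
  rw [Fintype.card_fin, Fintype.card_fin] at hmain
  refine div_le_of_le_mul₀ (by positivity) (by positivity) ?_
  have : (C.card : ℝ) ≤ X.ncard := by exact_mod_cast hCX
  have := mul_le_mul_of_nonneg_left this (show (0 : ℝ) ≤ m * (Vn : ℝ) ^ 2 by positivity)
  linarith
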